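/- Let φ be as in the standing hypotheses. Then for every r with a₁ < r < r₀ one has (1/r²)·∫_{D_r⁺(π(a))} |φ|² dx ≤ ( E(φ,r,π(a),λ,A_a) + H(φ,r,π(a)) ) / ( 1 − 2λ‖p‖_∞ r₀² ). -/

import Mathlib

/-!
The estimate is a magnetic Poincaré inequality on the half-disk `D = D_r⁺(c)`, `c = π(a)`:
`(1/r²)∫_D |φ|² ≤ ∫_D |(i∇+A_a)φ|² + H(φ,r,c)` (`poincare`).

It is obtained ray by ray in polar coordinates centred at `c` (`polar_halfDisk`). The pole `a` lies
on the ray `θ = 0`, so for almost every `θ` the function `ρ ↦ ρ²|φ(c + ρe^{iθ})|²` is continuous on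
`[0,r]` and differentiable on `(0,r)`. The diamagnetic inequality
`|Re(φ̄ ∂_ρφ)| ≤ |φ| |(i∇+A_a)φ|` (`diamagnetic`) and Young's inequality bound its derivative from
below by `ρ(|φ|² − r²|(i∇+A_a)φ|²)`; integrating in `ρ` (`ray_bound`) and then in `θ` gives the
claim.

Since `∫_D |(i∇+A_a)φ|² = E + λ∫_D p|φ|² ≤ E + λ‖p‖_∞ ∫_D |φ|²`, the last term can be absorbed into
the left-hand side, leaving the factor `1 − λ‖p‖_∞ r² ≥ 1 − 2λ‖p‖_∞ r₀²`.
-/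

open MeasureTheory Real Filter Set Asymptotics

noncomputable section

/-- The open half-disk `D_r⁺(c)`: points at distance `< r` from `c` with positive
first coordinate (we identify `ℝ²` with `ℂ`). -/
def halfDisk (c : ℂ) (r : ℝ) : Set ℂ := {x : ℂ | dist x c < r ∧ 0 < x.re}

/-- Projection onto the axis `{x₁ = 0}`: `π(a) = (0, a₂)`. -/
def proj (a : ℂ) : ℂ := (a.im : ℂ) * Complex.I

/-- First partial derivative of a complex-valued function on `ℝ² = ℂ`. -/
def pd1 (u : ℂ → ℂ) (x : ℂ) : ℂ := fderiv ℝ u x 1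

/-- Second partial derivative of a complex-valued function on `ℝ² = ℂ`. -/
def pd2 (u : ℂ → ℂ) (x : ℂ) : ℂ := fderiv ℝ u x Complex.I

/-- The Aharonov–Bohm potential `A_a(x)`, encoded as the complex number whose real and
imaginary parts are its two components:
`A_a(x) = (1/2)(−(x₂−a₂)/|x−a|², (x₁−a₁)/|x−a|²) = i(x−a)/(2|x−a|²)`. -/
def abPot (a x : ℂ) : ℂ := Complex.I * (x - a) / (2 * (‖x - a‖ : ℂ) ^ 2)

/-- First component of `A_a`. -/
def abPot1 (a x : ℂ) : ℝ := (abPot a x).re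

/-- Second component of `A_a`. -/
def abPot2 (a x : ℂ) : ℝ := (abPot a x).im

/-- First component of the magnetic gradient `(i∇ + A_a)u`. -/
def mg1 (a : ℂ) (u : ℂ → ℂ) (x : ℂ) : ℂ := Complex.I * pd1 u x + (abPot1 a x : ℂ) * u x

/-- Second component of the magnetic gradient `(i∇ + A_a)u`. -/
def mg2 (a : ℂ) (u : ℂ → ℂ) (x : ℂ) : ℂ := Complex.I * pd2 u x + (abPot2 a x : ℂ) * u x

/-- `|(i∇+A_a)u|²`. -/
def mgSq (a : ℂ) (u : ℂ → ℂ) (x : ℂ) : ℝ := ‖mg1 a u x‖ ^ 2 + ‖mg2 a u x‖ ^ 2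

/-- Arclength integral of `f` over the circular part `∂D_r⁺(c)` of the boundary of a
half-disk centered at a point `c` on the axis `{x₁ = 0}`, parametrized by the angle
`θ ∈ (−π/2, π/2)`. -/
def bdryInt (c : ℂ) (r : ℝ) (f : ℂ → ℝ) : ℝ :=
  ∫ θ in Ioo (-(π / 2)) (π / 2), r * f (circleMap c r θ)

/-- The Laplacian of a complex-valued function. -/
def lapC (u : ℂ → ℂ) (x : ℂ) : ℂ :=
  fderiv ℝ (fun y => pd1 u y) x 1 + fderiv ℝ (fun y => pd2 u y) x Complex.I

/-- Divergence `∇·A_a`. -/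
def divAB (a x : ℂ) : ℝ := fderiv ℝ (abPot1 a) x 1 + fderiv ℝ (abPot2 a) x Complex.I

/-- The magnetic Laplacian `(i∇+A_a)²u = −Δu + i(∇·A_a)u + 2i A_a·∇u + |A_a|²u`. -/
def magLap (a : ℂ) (u : ℂ → ℂ) (x : ℂ) : ℂ :=
  - lapC u x + Complex.I * (divAB a x : ℂ) * u x
    + 2 * Complex.I * ((abPot1 a x : ℂ) * pd1 u x + (abPot2 a x : ℂ) * pd2 u x)
    + ((abPot1 a x ^ 2 + abPot2 a x ^ 2 : ℝ) : ℂ) * u x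

/-- The Almgren energy `E(u,r,c,λ,A_a) = ∫_{D_r⁺(c)} (|(i∇+A_a)u|² − λp|u|²) dx`. -/
def Efun (a : ℂ) (u : ℂ → ℂ) (r : ℝ) (c : ℂ) (lam : ℝ) (p : ℂ → ℝ) : ℝ :=
  ∫ x in halfDisk c r, (mgSq a u x - lam * p x * ‖u x‖ ^ 2)

/-- `H(u,r,c) = (1/r)∫_{∂D_r⁺(c)} |u|² dσ`. -/
def Hfun (u : ℂ → ℂ) (r : ℝ) (c : ℂ) : ℝ := (1 / r) * bdryInt c r fun x => ‖u x‖ ^ 2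

/-- The Almgren frequency `N = E/H`. -/
def Nfun (a : ℂ) (u : ℂ → ℂ) (r : ℝ) (c : ℂ) (lam : ℝ) (p : ℂ → ℝ) : ℝ :=
  Efun a u r c lam p / Hfun u r c

lemma mem_halfDisk_circleMap {c : ℂ} (hc : c.re = 0) {r ρ θ : ℝ} (hρ : 0 < ρ) (hρr : ρ < r)
    (hθ : θ ∈ Ioo (-(π / 2)) (π / 2)) : circleMap c ρ θ ∈ halfDisk c r := by
  refine ⟨?_, ?_⟩
  · simpa [circleMap, dist_eq_norm, abs_of_pos hρ] using hρr
  · have h := mul_pos hρ (Real.cos_pos_of_mem_Ioo hθ)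
    simpa [circleMap, hc, Complex.exp_ofReal_mul_I_re] using h

lemma add_polarCoord_symm (c : ℂ) (ρ θ : ℝ) :
    c + Complex.measurableEquivRealProd.symm (polarCoord.symm (ρ, θ)) = circleMap c ρ θ := by
  rw [Complex.measurableEquivRealProd_symm_polarCoord_symm_apply,
    Complex.polarCoord_symm_apply, circleMap, Complex.exp_mul_I]
  simp

/-- In polar coordinates around `c`, the half-disk is the rectangle `(0,r) × (−π/2,π/2)`. -/
lemma polar_image_eq {c : ℂ} (hc : c.re = 0) {r : ℝ} :
    polarCoord.symm '' (Ioo 0 r ×ˢ Ioo (-(π / 2)) (π / 2)) =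
      (fun q : ℝ × ℝ => c + Complex.measurableEquivRealProd.symm q) ⁻¹' halfDisk c r := by
  ext q
  constructor
  · rintro ⟨⟨ρ, θ⟩, ⟨hρ, hθ⟩, rfl⟩
    have h := mem_halfDisk_circleMap hc hρ.1 hρ.2 hθ
    have e := add_polarCoord_symm c ρ θ
    simpa only [mem_preimage, e] using h
  · intro h
    obtain ⟨h1, h2⟩ := h
    set z : ℂ := Complex.measurableEquivRealProd.symm q with hz
    have hzre : 0 < z.re := by
      have h2' : 0 < (c + z).re := h2
      rwa [Complex.add_re, hc, zero_add] at h2'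
    have hq : Complex.measurableEquivRealProd z = q := by simp [hz]
    have hq1 : q.1 = z.re := by rw [← hq]; rfl
    have hq2 : q.2 = z.im := by rw [← hq]; rfl
    have hsrc : q ∈ polarCoord.source := by
      left; simpa [hq1] using hzre
    have hpc : polarCoord q = (‖z‖, z.arg) := by
      have := Complex.polarCoord_apply z
      rw [← this, ← hq]; rfl
    refine ⟨polarCoord q, ?_, polarCoord.left_inv hsrc⟩
    rw [hpc]
    refine ⟨⟨?_, ?_⟩, ?_⟩
    · exact norm_pos_iff.2 (fun h0 => by simp [h0] at hzre)
    · have h1' : dist (c + z) c < r := h1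
      rwa [dist_eq_norm, add_sub_cancel_left] at h1'
    · have := Complex.abs_arg_lt_pi_div_two_iff.2 (Or.inl hzre)
      exact abs_lt.1 this

/-- Polar coordinates centred at a point of the axis `{x₁ = 0}`, for the half-disk. -/
lemma polar_halfDisk {c : ℂ} (hc : c.re = 0) {r : ℝ} {F : ℂ → ℝ}
    (hF : IntegrableOn F (halfDisk c r)) :
    IntegrableOn (fun q : ℝ × ℝ => q.1 * F (circleMap c q.1 q.2))
        (Ioo 0 r ×ˢ Ioo (-(π / 2)) (π / 2)) ∧
      ∫ x in halfDisk c r, F x =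
        ∫ q in Ioo 0 r ×ˢ Ioo (-(π / 2)) (π / 2), q.1 * F (circleMap c q.1 q.2) := by
  have hmp : MeasurePreserving (fun q : ℝ × ℝ => c + Complex.measurableEquivRealProd.symm q) :=
    (measurePreserving_add_left volume c).comp
      (Complex.volume_preserving_equiv_real_prod.symm)
  have hme : MeasurableEmbedding
      (fun q : ℝ × ℝ => c + Complex.measurableEquivRealProd.symm q) :=
    (measurableEmbedding_addLeft c).comp
      (Complex.measurableEquivRealProd.symm.measurableEmbedding)
  have hs : MeasurableSet (Ioo 0 r ×ˢ Ioo (-(π / 2)) (π / 2) : Set (ℝ × ℝ)) :=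
    measurableSet_Ioo.prod measurableSet_Ioo
  have hinj : InjOn polarCoord.symm (Ioo 0 r ×ˢ Ioo (-(π / 2)) (π / 2)) := by
    refine polarCoord.symm.injOn.mono ?_
    rintro ⟨ρ, θ⟩ ⟨hρ, hθ⟩
    exact ⟨hρ.1, by have := hθ.1; simp only at this ⊢; linarith [pi_pos],
      by have := hθ.2; simp only at this ⊢; linarith [pi_pos]⟩
  have hd : ∀ x ∈ (Ioo 0 r ×ˢ Ioo (-(π / 2)) (π / 2) : Set (ℝ × ℝ)),
      HasFDerivWithinAt polarCoord.symm (fderivPolarCoordSymm x)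
        (Ioo 0 r ×ˢ Ioo (-(π / 2)) (π / 2)) x :=
    fun x _ => (hasFDerivAt_polarCoord_symm x).hasFDerivWithinAt
  have hcongr : EqOn (fun q : ℝ × ℝ => |(fderivPolarCoordSymm q).det| •
        (F ∘ fun q : ℝ × ℝ => c + Complex.measurableEquivRealProd.symm q) (polarCoord.symm q))
      (fun q : ℝ × ℝ => q.1 * F (circleMap c q.1 q.2))
      (Ioo 0 r ×ˢ Ioo (-(π / 2)) (π / 2)) := by
    rintro ⟨ρ, θ⟩ ⟨hρ, hθ⟩
    have e := add_polarCoord_symm c ρ θ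
    simp only [det_fderivPolarCoordSymm, Function.comp_apply, e, smul_eq_mul]
    rw [abs_of_pos hρ.1]
  constructor
  · rw [← integrableOn_congr_fun hcongr hs,
      ← integrableOn_image_iff_integrableOn_abs_det_fderiv_smul volume hs hd hinj,
      polar_image_eq hc]
    exact (hmp.integrableOn_comp_preimage hme).2 hF
  · rw [← setIntegral_congr_fun hs hcongr,
      ← integral_image_eq_integral_abs_det_fderiv_smul volume hs hd hinj,
      polar_image_eq hc]
    exact (hmp.setIntegral_preimage_emb hme F _).symm

lemma halfDisk_isOpen (c : ℂ) (r : ℝ) : IsOpen (halfDisk c r) :=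
  (Metric.isOpen_ball (x := c) (ε := r)).inter
    (isOpen_lt continuous_const Complex.continuous_re)

lemma halfDisk_closure_compact (c : ℂ) (r : ℝ) : IsCompact (closure (halfDisk c r)) :=
  (Metric.isBounded_ball.subset (fun _ hx => hx.1 : halfDisk c r ⊆ Metric.ball c r)
    ).isCompact_closure

/-- The diamagnetic inequality in the direction `e^{iθ}`: the real multiple `A_a φ` does not
contribute to `Re (φ̄ ∂φ)`, so the gradient may be replaced by the magnetic gradient. -/
lemma diamagnetic (a : ℂ) (u : ℂ → ℂ) (x : ℂ) (θ : ℝ) :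
    |inner ℝ (u x) (fderiv ℝ u x (Complex.exp (θ * Complex.I)))| ≤ ‖u x‖ * √(mgSq a u x) := by
  set w : ℂ := (Real.cos θ : ℂ) * mg1 a u x + (Real.sin θ : ℂ) * mg2 a u x with hw
  have hexp : Complex.exp (θ * Complex.I) =
      Real.cos θ • (1 : ℂ) + Real.sin θ • Complex.I := by
    rw [Complex.exp_mul_I]; simp
  have h1 : inner ℝ (u x) (fderiv ℝ u x (Complex.exp (θ * Complex.I))) =
      inner ℝ (u x) (-Complex.I * w) := by
    rw [hexp, map_add, map_smul, map_smul]
    simp only [hw, mg1, mg2, pd1, pd2, Complex.inner, Complex.real_smul]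
    simp
    ring
  have h2 : ‖w‖ ≤ √(mgSq a u x) := by
    apply Real.le_sqrt_of_sq_le
    have t : ‖w‖ ≤ |Real.cos θ| * ‖mg1 a u x‖ + |Real.sin θ| * ‖mg2 a u x‖ := by
      refine (norm_add_le _ _).trans ?_
      simp [-Complex.ofReal_cos, -Complex.ofReal_sin]
    have hcs : |Real.cos θ| ^ 2 + |Real.sin θ| ^ 2 = 1 := by
      simp [Real.cos_sq_add_sin_sq]
    refine (pow_le_pow_left₀ (norm_nonneg _) t 2).trans ?_
    unfold mgSq
    nlinarith [sq_nonneg (|Real.cos θ| * ‖mg2 a u x‖ - |Real.sin θ| * ‖mg1 a u x‖)]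
  rw [h1]
  refine (abs_real_inner_le_norm _ _).trans ?_
  simpa using mul_le_mul_of_nonneg_left h2 (norm_nonneg (u x))

/-- The radial estimate on one ray avoiding the pole `a`: integrate
`(ρ²|φ|²)' ≥ ρ|φ|² − r²ρ|(i∇+A_a)φ|²` over `(0,r)`. -/
lemma ray_bound {a : ℂ} {r r₀ θ : ℝ} {c : ℂ} (hc : c.re = 0) (hr : 0 < r) (hrr : r < r₀)
    {φ : ℂ → ℂ} (hcont : ContinuousOn φ (closure (halfDisk c r₀)))
    (hC2 : ContDiffOn ℝ 2 φ (halfDisk c r₀ \ {a}))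
    (hθ : θ ∈ Ioo (-(π / 2)) (π / 2)) (ha : ∀ ρ : ℝ, circleMap c ρ θ ≠ a)
    (hint : IntegrableOn (fun ρ => ρ * (‖φ (circleMap c ρ θ)‖ ^ 2 -
      r ^ 2 * mgSq a φ (circleMap c ρ θ))) (Ioo 0 r)) :
    ∫ ρ in Ioo 0 r, ρ * (‖φ (circleMap c ρ θ)‖ ^ 2 - r ^ 2 * mgSq a φ (circleMap c ρ θ)) ≤
      r ^ 2 * ‖φ (circleMap c r θ)‖ ^ 2 := by
  have hγc : Continuous fun ρ : ℝ => circleMap c ρ θ := by unfold circleMap; fun_prop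
  have hmaps : MapsTo (fun ρ : ℝ => circleMap c ρ θ) (Icc 0 r) (closure (halfDisk c r₀)) := by
    have h : MapsTo (fun ρ : ℝ => circleMap c ρ θ) (Ioo 0 r) (halfDisk c r₀) :=
      fun ρ hρ => mem_halfDisk_circleMap hc hρ.1 (hρ.2.trans hrr) hθ
    have := h.closure hγc
    rwa [closure_Ioo hr.ne] at this
  have hopen : IsOpen (halfDisk c r₀ \ {a}) := (halfDisk_isOpen c r₀).sdiff isClosed_singleton
  have key := intervalIntegral.integral_le_sub_of_hasDeriv_right_of_le (a := 0) (b := r)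
    (g := fun ρ => ρ ^ 2 * ‖φ (circleMap c ρ θ)‖ ^ 2)
    (g' := fun ρ => 2 * ρ * ‖φ (circleMap c ρ θ)‖ ^ 2 + ρ ^ 2 * (2 * inner ℝ (φ (circleMap c ρ θ))
      (fderiv ℝ φ (circleMap c ρ θ) (Complex.exp (θ * Complex.I)))))
    (φ := fun ρ => ρ * (‖φ (circleMap c ρ θ)‖ ^ 2 - r ^ 2 * mgSq a φ (circleMap c ρ θ)))
    hr.le ?_ ?_ ?_ ?_
  · rw [intervalIntegral.integral_of_le hr.le, integral_Ioc_eq_integral_Ioo] at key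
    simpa using key
  · have := (hcont.comp hγc.continuousOn hmaps).norm.pow 2
    exact (continuousOn_id.pow 2).mul this
  · intro ρ hρ
    have hx : circleMap c ρ θ ∈ halfDisk c r₀ \ {a} :=
      ⟨mem_halfDisk_circleMap hc hρ.1 (hρ.2.trans hrr) hθ, ha ρ⟩
    have hφ : HasFDerivAt φ (fderiv ℝ φ (circleMap c ρ θ)) (circleMap c ρ θ) :=
      ((hC2.contDiffAt (hopen.mem_nhds hx)).differentiableAt (by norm_num)).hasFDerivAt
    have hγ : HasDerivAt (fun ρ : ℝ => circleMap c ρ θ) (Complex.exp (θ * Complex.I)) ρ := by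
      have := ((Complex.ofRealCLM.hasDerivAt (x := ρ)).mul_const
        (Complex.exp (θ * Complex.I))).const_add c
      simpa [circleMap] using this
    have h1 := (hφ.comp_hasDerivAt ρ hγ).norm_sq
    have h2 := ((hasDerivAt_id ρ).pow 2).mul h1
    refine HasDerivAt.hasDerivWithinAt ?_
    refine h2.congr_deriv ?_
    simp
  · exact (integrableOn_Icc_iff_integrableOn_Ioo).2 hint
  · intro ρ hρ
    set x := circleMap c ρ θ
    have hd := (abs_le.1 (diamagnetic a φ x θ)).1
    have hm0 : 0 ≤ mgSq a φ x := by unfold mgSq; positivity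
    have hs := Real.sq_sqrt hm0
    set m := √(mgSq a φ x)
    rw [← hs]
    have hρ0 := hρ.1
    have hsq : ρ ^ 2 * m ^ 2 ≤ r ^ 2 * m ^ 2 :=
      mul_le_mul_of_nonneg_right (pow_le_pow_left₀ hρ0.le hρ.2.le 2) (sq_nonneg m)
    have h3 : 0 ≤ ρ * (‖φ x‖ ^ 2 + r ^ 2 * m ^ 2 - 2 * ρ * (‖φ x‖ * m)) :=
      mul_nonneg hρ0.le (by nlinarith [sq_nonneg (‖φ x‖ - ρ * m)])
    have h4 := mul_le_mul_of_nonneg_left hd (sq_nonneg ρ)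
    nlinarith

/-- The magnetic Poincaré inequality
`∫_{D_r⁺} (|φ|² − r²|(i∇+A_a)φ|²) ≤ r² ∫_{−π/2}^{π/2} |φ(c + re^{iθ})|² dθ`. -/
lemma poincare {a c : ℂ} {r r₀ : ℝ} (hc : c.re = 0) (hca : c.im = a.im) (hr : 0 < r)
    (hrr : r < r₀) (har : 0 < a.re)
    {φ : ℂ → ℂ} (hcont : ContinuousOn φ (closure (halfDisk c r₀)))
    (hC2 : ContDiffOn ℝ 2 φ (halfDisk c r₀ \ {a}))
    (hint : IntegrableOn (fun x => ‖φ x‖ ^ 2 - r ^ 2 * mgSq a φ x) (halfDisk c r)) :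
    ∫ x in halfDisk c r, (‖φ x‖ ^ 2 - r ^ 2 * mgSq a φ x) ≤
      r ^ 2 * ∫ θ in Ioo (-(π / 2)) (π / 2), ‖φ (circleMap c r θ)‖ ^ 2 := by
  obtain ⟨hI, heq⟩ := polar_halfDisk hc hint
  rw [heq]
  rw [IntegrableOn, Measure.volume_eq_prod, ← Measure.prod_restrict] at hI
  rw [Measure.volume_eq_prod, ← Measure.prod_restrict, integral_prod_symm _ hI,
    ← integral_const_mul]
  refine integral_mono_ae hI.integral_prod_right ?_ ?_
  · have hmaps : MapsTo (fun θ : ℝ => circleMap c r θ) (Icc (-(π / 2)) (π / 2))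
        (closure (halfDisk c r₀)) := by
      have h : MapsTo (fun θ : ℝ => circleMap c r θ) (Ioo (-(π / 2)) (π / 2))
          (halfDisk c r₀) := fun θ hθ => mem_halfDisk_circleMap hc hr hrr hθ
      have := h.closure (continuous_circleMap c r)
      rwa [closure_Ioo (by linarith [pi_pos])] at this
    have h1 := ((hcont.comp (continuous_circleMap c r).continuousOn hmaps).norm.pow 2)
    have h2 : IntegrableOn (fun θ => r ^ 2 * ‖φ (circleMap c r θ)‖ ^ 2)
        (Icc (-(π / 2)) (π / 2)) :=
      (continuousOn_const.mul h1).integrableOn_compact isCompact_Icc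
    exact h2.mono_set Ioo_subset_Icc_self
  · have hne : ∀ᵐ θ : ℝ ∂(volume.restrict (Ioo (-(π / 2)) (π / 2))), θ ≠ 0 :=
      ae_restrict_of_ae (by simp [ae_iff])
    filter_upwards [hI.prod_left_ae, hne, ae_restrict_mem measurableSet_Ioo] with θ h1 h2 h3
    refine ray_bound hc hr hrr hcont hC2 h3 ?_ h1
    -- the pole lies on the ray `θ = 0`
    intro ρ hρ
    have him : ρ * Real.sin θ = 0 := by
      have := congrArg Complex.im hρ
      simpa [circleMap, hca, Complex.exp_ofReal_mul_I_im, -mul_eq_zero] using this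
    have hre : ρ * Real.cos θ = a.re := by
      have := congrArg Complex.re hρ
      simpa [circleMap, hc, Complex.exp_ofReal_mul_I_re] using this
    rcases mul_eq_zero.1 him with h | h
    · rw [h] at hre; simp at hre; linarith
    · exact h2 ((Real.sin_eq_zero_iff_of_lt_of_lt (by linarith [h3.1, pi_pos])
        (by linarith [h3.2, pi_pos])).1 h)

/-- Under the standing hypotheses, for every `a₁ < r < r₀`,
`(1/r²)∫_{D_r⁺(π(a))}|φ|² dx ≤ (E(φ,r,π(a),λ,A_a) + H(φ,r,π(a))) / (1 − 2λ‖p‖_∞ r₀²)`. -/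
theorem L2_bound_by_E_plus_H
    (a : ℂ) (ha : 0 < a.re)
    (lam r₀ : ℝ) (hlam : 0 < lam) (har₀ : a.re < r₀)
    (p : ℂ → ℝ) (hp : ContDiff ℝ 1 p) (hppos : ∀ x, 0 < p x)
    (hpbdd : BddAbove (Set.range p))
    (hpgrad : ∃ Cg : ℝ, ∀ x, ‖fderiv ℝ p x‖ ≤ Cg)
    (hsmall : 2 * lam * sSup (Set.range p) * r₀ ^ 2 < 1)
    (φ : ℂ → ℂ)
    (hcont : ContinuousOn φ (closure (halfDisk (proj a) r₀)))
    (hbc : ∀ x ∈ closure (halfDisk (proj a) r₀), x.re = 0 → φ x = 0)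
    (hC2 : ContDiffOn ℝ 2 φ (halfDisk (proj a) r₀ \ {a}))
    (heq : ∀ x ∈ halfDisk (proj a) r₀ \ {a},
      magLap a φ x = ((lam * p x : ℝ) : ℂ) * φ x)
    (hint : IntegrableOn (mgSq a φ) (halfDisk (proj a) r₀))
    : ∀ r : ℝ, a.re < r → r < r₀ →
      (1 / r ^ 2) * (∫ x in halfDisk (proj a) r, ‖φ x‖ ^ 2) ≤
        (Efun a φ r (proj a) lam p + Hfun φ r (proj a)) /
          (1 - 2 * lam * sSup (Set.range p) * r₀ ^ 2) := by
  intro r har hrr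
  have hr : 0 < r := ha.trans har
  have hc : (proj a).re = 0 := by simp [proj]
  have hca : (proj a).im = a.im := by simp [proj]
  set c := proj a
  set S := sSup (Set.range p)
  have hsub : halfDisk c r ⊆ halfDisk c r₀ := fun x hx => ⟨hx.1.trans hrr, hx.2⟩
  have hK := halfDisk_closure_compact c r₀
  have hsubK : halfDisk c r ⊆ closure (halfDisk c r₀) := hsub.trans subset_closure
  have hφ2 : ContinuousOn (fun x => ‖φ x‖ ^ 2) (closure (halfDisk c r₀)) := hcont.norm.pow 2
  have hi1 : IntegrableOn (fun x => ‖φ x‖ ^ 2) (halfDisk c r) :=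
    (hφ2.integrableOn_compact hK).mono_set hsubK
  have hi2 : IntegrableOn (fun x => lam * p x * ‖φ x‖ ^ 2) (halfDisk c r) :=
    (((continuousOn_const.mul hp.continuous.continuousOn).mul hφ2).integrableOn_compact
      hK).mono_set hsubK
  have hi3 : IntegrableOn (mgSq a φ) (halfDisk c r) := hint.mono_set hsub
  have hpoin := poincare hc hca hr hrr ha hcont hC2 (hi1.sub (hi3.const_mul (r ^ 2)))
  rw [integral_sub hi1 (hi3.const_mul (r ^ 2)), integral_const_mul] at hpoin
  have hE : Efun a φ r c lam p = (∫ x in halfDisk c r, mgSq a φ x) -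
      ∫ x in halfDisk c r, lam * p x * ‖φ x‖ ^ 2 := integral_sub hi3 hi2
  have hH : Hfun φ r c = ∫ θ in Ioo (-(π / 2)) (π / 2), ‖φ (circleMap c r θ)‖ ^ 2 := by
    unfold Hfun bdryInt
    rw [integral_const_mul]
    field_simp
  have hpS : ∫ x in halfDisk c r, lam * p x * ‖φ x‖ ^ 2 ≤
      lam * S * ∫ x in halfDisk c r, ‖φ x‖ ^ 2 := by
    rw [← integral_const_mul]
    refine integral_mono hi2 (hi1.const_mul _) fun x => ?_
    have : p x ≤ S := le_csSup hpbdd ⟨x, rfl⟩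
    simp only
    gcongr
  have hS : 0 < S := (hppos 0).trans_le (le_csSup hpbdd ⟨0, rfl⟩)
  have hX : 0 ≤ ∫ x in halfDisk c r, ‖φ x‖ ^ 2 := integral_nonneg fun x => by positivity
  rw [← hH] at hpoin
  rw [le_div_iff₀ (by linarith), hE]
  set X := ∫ x in halfDisk c r, ‖φ x‖ ^ 2
  set G := ∫ x in halfDisk c r, mgSq a φ x
  have hX' : X / r ^ 2 ≤ G + Hfun φ r c := by
    rw [div_le_iff₀ (by positivity)]; linarith
  have hLr : lam * S * r ^ 2 ≤ 2 * lam * S * r₀ ^ 2 := by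
    have h1 : r ^ 2 ≤ r₀ ^ 2 := pow_le_pow_left₀ hr.le hrr.le 2
    have h2 : 0 < lam * S := mul_pos hlam hS
    nlinarith [sq_nonneg r₀]
  have hY : 0 ≤ X / r ^ 2 := by positivity
  have hXY : X = X / r ^ 2 * r ^ 2 := by field_simp
  have h5 : X / r ^ 2 * (lam * S * r ^ 2) ≤ X / r ^ 2 * (2 * lam * S * r₀ ^ 2) :=
    mul_le_mul_of_nonneg_left hLr hY
  have h6 : X / r ^ 2 * (lam * S * r ^ 2) = lam * S * X := by field_simp
  have h7 : 1 / r ^ 2 * X = X / r ^ 2 := by ring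
  rw [h7]
  linarith

end
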